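/- Fix an integer d ≥ 2, a real α > 1, and ε > 0. There exist constants C > 0 and c > 0 such that for every prime p and every nontrivial irreducible unitary representation π of SL₂(ℤ/pℤ), with probability at least 1 − c·p^{−1/4} over a uniformly chosen tuple S = (g₁, …, g_d) ∈ (SL₂(ℤ/pℤ))^d, the number N(α, π, S) of eigenvalues λ of A_{π,S} (counted with multiplicity) satisfying |λ| > α·2√(2d−1) obeys N(α, π, S) ≤ C·p^{1 − (log_{2d}(α) − ε)/2}. -/

import Mathlib

open MeasureTheory

noncomputable section

abbrev SL (n p : ℕ) := Matrix.SpecialLinearGroup (Fin n) (ZMod p)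

/-- Density of the Kesten–McKay law with parameter `2d`. -/
noncomputable def kmDensity (d : ℕ) (x : ℝ) : ℝ :=
  if x ^ 2 ≤ 4 * (2 * (d : ℝ) - 1) then
    2 * d * Real.sqrt (4 * (2 * (d : ℝ) - 1) - x ^ 2) /
      (2 * Real.pi * ((2 * (d : ℝ)) ^ 2 - x ^ 2))
  else 0

/-- The Kesten–McKay law with parameter `2d`, as a measure on `ℝ`. -/
noncomputable def kestenMcKay (d : ℕ) : Measure ℝ :=
  MeasureTheory.volume.withDensity fun x => ENNReal.ofReal (kmDensity d x)

/-- Discrepancy between two measures on ℝ. -/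
noncomputable def discrepancy (ν μ : Measure ℝ) : ℝ :=
  sSup {r : ℝ | ∃ a b : ℝ, a ≤ b ∧
    r = |(ν (Set.Icc a b)).toReal - (μ (Set.Icc a b)).toReal|}

/-- The element of the free group on `d` generators given by a word of length `m`. -/
def wordProd {d m : ℕ} (w : Fin m → Fin d × Bool) : FreeGroup (Fin d) :=
  (List.ofFn fun j => if (w j).2 then FreeGroup.of (w j).1 else (FreeGroup.of (w j).1)⁻¹).prod

/-- Evaluation of a word of length `m` in `d` letters at a tuple `S`. -/
def wordEval {G : Type*} [Group G] {d m : ℕ} (S : Fin d → G) (w : Fin m → Fin d × Bool) : G :=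
  (List.ofFn fun j => if (w j).2 then S (w j).1 else (S (w j).1)⁻¹).prod

/-- `N(d,m)`: the number of trivial words of length `m` in `d` letters. -/
noncomputable def Ntriv (d m : ℕ) : ℕ :=
  Nat.card {w : Fin m → Fin d × Bool // wordProd w = 1}

/-- `A_{π,S} = Σᵢ (π gᵢ + (π gᵢ)⁻¹)`. -/
noncomputable def Amat {G : Type*} [Group G] {n d : ℕ}
    (π : G →* Matrix.unitaryGroup (Fin n) ℂ) (S : Fin d → G) : Matrix (Fin n) (Fin n) ℂ :=
  ∑ i, ((π (S i) : Matrix (Fin n) (Fin n) ℂ) + ((π (S i))⁻¹ : Matrix (Fin n) (Fin n) ℂ))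

/-- Spectral probability measure of a Hermitian matrix. -/
noncomputable def specMeasure {n : ℕ} (A : Matrix (Fin n) (Fin n) ℂ) : Measure ℝ := by
  classical
  exact if hA : A.IsHermitian then
    (n : ENNReal)⁻¹ • ∑ j : Fin n, Measure.dirac (hA.eigenvalues j) else 0

/-- A unitary representation is irreducible if the only invariant subspaces are `⊥` and `⊤`. -/
def IsIrreducibleRep {G : Type*} [Group G] {n : ℕ}
    (π : G →* Matrix.unitaryGroup (Fin n) ℂ) : Prop :=
  ∀ W : Submodule ℂ (Fin n → ℂ),
    (∀ g : G, ∀ v ∈ W, (π g : Matrix (Fin n) (Fin n) ℂ).mulVec v ∈ W) → W = ⊥ ∨ W = ⊤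

/-- Number of eigenvalues of a Hermitian matrix with `|λ| > t`, with multiplicity. -/
noncomputable def excCount {n : ℕ} (A : Matrix (Fin n) (Fin n) ℂ) (t : ℝ) : ℕ := by
  classical
  exact if hA : A.IsHermitian then
    (Finset.univ.filter fun j : Fin n => t < |hA.eigenvalues j|).card else 0

end

/-- A commuting family of matrices preserving a nonzero subspace has a common eigenvector in it. -/
lemma exists_common_eigenvector {ι : Type*} {n : ℕ} (f : ι → Matrix (Fin n) (Fin n) ℂ)
    (hc : ∀ i j, f i * f j = f j * f i) (W₀ : Submodule ℂ (Fin n → ℂ)) (h0 : W₀ ≠ ⊥)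
    (hW : ∀ i, ∀ v ∈ W₀, (f i).mulVec v ∈ W₀) :
    ∃ v ∈ W₀, v ≠ 0 ∧ ∀ i, ∃ c : ℂ, (f i).mulVec v = c • v := by
  classical
  obtain ⟨W, ⟨hWle, hWne, hWinv⟩, hmin⟩ := (wellFounded_lt (α := Submodule ℂ (Fin n → ℂ))).has_min
    {W | W ≤ W₀ ∧ W ≠ ⊥ ∧ ∀ i, ∀ v ∈ W, (f i).mulVec v ∈ W} ⟨W₀, le_rfl, h0, hW⟩
  obtain ⟨v, hv, hv0⟩ := Submodule.exists_mem_ne_zero_of_ne_bot hWne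
  refine ⟨v, hWle hv, hv0, fun i => ?_⟩
  have : Nontrivial W := ⟨⟨⟨v, hv⟩, 0, fun h => hv0 (congrArg Subtype.val h)⟩⟩
  let T : Module.End ℂ W := ((f i).mulVecLin.restrict (p := W) (q := W)
    (fun x hx => by simpa using hWinv i x hx))
  obtain ⟨c, hT⟩ := Module.End.exists_eigenvalue T
  obtain ⟨x, hx⟩ := hT.exists_hasEigenvector
  have hx1 : (f i).mulVec (x : Fin n → ℂ) = c • (x : Fin n → ℂ) := by
    have := congrArg Subtype.val hx.apply_eq_smul
    simpa [T] using this
  let W' : Submodule ℂ (Fin n → ℂ) := W ⊓ LinearMap.ker ((f i).mulVecLin - c • LinearMap.id)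
  have hmem : ∀ y, y ∈ W' ↔ y ∈ W ∧ (f i).mulVec y = c • y := by
    intro y
    simp [W', sub_eq_zero]
  have hW' : W' ∈ {W | W ≤ W₀ ∧ W ≠ ⊥ ∧ ∀ i, ∀ v ∈ W, (f i).mulVec v ∈ W} := by
    refine ⟨inf_le_left.trans hWle, ?_, ?_⟩
    · intro hb
      have : (x : Fin n → ℂ) ∈ W' := (hmem _).2 ⟨x.2, hx1⟩
      rw [hb, Submodule.mem_bot] at this
      exact hx.2 (Subtype.ext this)
    · intro j y hy
      rw [hmem] at hy ⊢
      refine ⟨hWinv j y hy.1, ?_⟩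
      rw [Matrix.mulVec_mulVec, hc, ← Matrix.mulVec_mulVec, hy.2, Matrix.mulVec_smul]
  have := hmin W' hW'
  have hle : W' ≤ W := inf_le_left
  have heq : W' = W := by
    by_contra h
    exact this (lt_of_le_of_ne hle h)
  exact ⟨c, ((hmem v).1 (heq ▸ hv)).2⟩

set_option linter.unusedSectionVars false

section Rep

variable {p : ℕ} [Fact p.Prime]

/-- upper unipotent -/
def uni (s : ZMod p) : SL 2 p := ⟨!![1, s; 0, 1], by simp [Matrix.det_fin_two]⟩

/-- anti-diagonal matrix with lower-left entry `c` -/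
def wel (c : ZMod p) (hc : c ≠ 0) : SL 2 p :=
  ⟨!![0, -c⁻¹; c, 0], by simp [Matrix.det_fin_two, hc]⟩

/-- The anti-involution of `SL₂` swapping the diagonal entries. -/
def tau (g : SL 2 p) : SL 2 p :=
  ⟨!![g 1 1, g 0 1; g 1 0, g 0 0], by
    have := g.det_coe
    rw [Matrix.det_fin_two] at this
    simp [Matrix.det_fin_two]; linear_combination this⟩

lemma sl_ext {g h : SL 2 p} (h00 : g 0 0 = h 0 0) (h01 : g 0 1 = h 0 1)
    (h10 : g 1 0 = h 1 0) (h11 : g 1 1 = h 1 1) : g = h := by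
  ext i j
  fin_cases i <;> fin_cases j <;> assumption

lemma sl_det (g : SL 2 p) : g 0 0 * g 1 1 - g 0 1 * g 1 0 = 1 := by
  have := g.det_coe
  rwa [Matrix.det_fin_two] at this

lemma sl_mul (g h : SL 2 p) (i j : Fin 2) : (g * h) i j = g i 0 * h 0 j + g i 1 * h 1 j := by
  rw [Matrix.SpecialLinearGroup.coe_mul, Matrix.mul_apply, Fin.sum_univ_two]

@[simp] lemma uni00 (s : ZMod p) : (uni s) 0 0 = 1 := rfl
@[simp] lemma uni01 (s : ZMod p) : (uni s) 0 1 = s := rfl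
@[simp] lemma uni10 (s : ZMod p) : (uni s) 1 0 = 0 := rfl
@[simp] lemma uni11 (s : ZMod p) : (uni s) 1 1 = 1 := rfl
@[simp] lemma wel00 (c : ZMod p) (hc) : (wel c hc) 0 0 = 0 := rfl
@[simp] lemma wel01 (c : ZMod p) (hc) : (wel c hc) 0 1 = -c⁻¹ := rfl
@[simp] lemma wel10 (c : ZMod p) (hc) : (wel c hc) 1 0 = c := rfl
@[simp] lemma wel11 (c : ZMod p) (hc) : (wel c hc) 1 1 = 0 := rfl
@[simp] lemma tau00 (g : SL 2 p) : (tau g) 0 0 = g 1 1 := rfl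
@[simp] lemma tau01 (g : SL 2 p) : (tau g) 0 1 = g 0 1 := rfl
@[simp] lemma tau10 (g : SL 2 p) : (tau g) 1 0 = g 1 0 := rfl
@[simp] lemma tau11 (g : SL 2 p) : (tau g) 1 1 = g 0 0 := rfl

lemma uni_add (s t : ZMod p) : uni (s + t) = uni s * uni t := by
  apply sl_ext <;> simp [sl_mul, add_comm]

lemma uni_zero : uni (0 : ZMod p) = 1 := by
  apply sl_ext <;> simp

lemma tau_tau (g : SL 2 p) : tau (tau g) = g := by
  apply sl_ext <;> simp

lemma tau_mul (g h : SL 2 p) : tau (g * h) = tau h * tau g := by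
  apply sl_ext <;> simp [sl_mul] <;> ring

lemma tau_uni (s : ZMod p) : tau (uni s) = uni s := by
  apply sl_ext <;> simp

lemma bruhat (g : SL 2 p) (hc : g 1 0 ≠ 0) :
    g = uni (g 0 0 / g 1 0) * wel (g 1 0) hc * uni (g 1 1 / g 1 0) := by
  have := sl_det g
  apply sl_ext <;> simp [sl_mul] <;> field_simp
  linear_combination -this

variable {n : ℕ} (ρ : SL 2 p →* Matrix (Fin n) (Fin n) ℂ)

/-- isotypic projection on the unipotent subgroup -/
noncomputable def eproj (j : ZMod p) : Matrix (Fin n) (Fin n) ℂ :=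
  (p : ℂ)⁻¹ • ∑ s : ZMod p, (ZMod.stdAddChar (-(j * s)) : ℂ) • ρ (uni s)

lemma eproj_sum : ∑ j, eproj ρ j = 1 := by
  have hp : (p : ℂ) ≠ 0 := by exact_mod_cast (Fact.out : p.Prime).ne_zero
  unfold eproj
  rw [← Finset.smul_sum, Finset.sum_comm]
  have : ∀ s : ZMod p, ∑ j : ZMod p, (ZMod.stdAddChar (-(j * s)) : ℂ) • ρ (uni s)
      = if s = 0 then (p : ℂ) • 1 else 0 := by
    intro s
    rw [← Finset.sum_smul]
    have h := AddChar.sum_mulShift (-s) (ZMod.isPrimitive_stdAddChar p)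
    simp only [mul_neg, neg_eq_zero, ZMod.card] at h
    rw [h]
    split_ifs with h0
    · subst h0; simp [uni_zero]
    · simp
  simp only [this]
  simp [hp]

lemma uni_mul_eproj (j x : ZMod p) :
    ρ (uni x) * eproj ρ j = (ZMod.stdAddChar (j * x) : ℂ) • eproj ρ j := by
  unfold eproj
  rw [mul_smul_comm, smul_comm]
  congr 1
  rw [Finset.mul_sum, Finset.smul_sum]
  apply Fintype.sum_equiv (Equiv.addLeft x)
  intro s
  simp only [Equiv.coe_addLeft]
  rw [mul_smul_comm, ← map_mul, ← uni_add, smul_smul, ← AddChar.map_add_eq_mul]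
  congr 2; ring

lemma eproj_mul_uni (j x : ZMod p) :
    eproj ρ j * ρ (uni x) = (ZMod.stdAddChar (j * x) : ℂ) • eproj ρ j := by
  unfold eproj
  rw [smul_mul_assoc, smul_comm]
  congr 1
  rw [Finset.sum_mul, Finset.smul_sum]
  apply Fintype.sum_equiv (Equiv.addRight x)
  intro s
  simp only [Equiv.coe_addRight]
  rw [smul_mul_assoc, ← map_mul, ← uni_add, smul_smul, ← AddChar.map_add_eq_mul]
  congr 2; ring

lemma eproj_sq (j : ZMod p) : eproj ρ j * eproj ρ j = eproj ρ j := by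
  have hp : (p : ℂ) ≠ 0 := by exact_mod_cast (Fact.out : p.Prime).ne_zero
  conv_lhs => enter [1]; unfold eproj
  rw [smul_mul_assoc, Finset.sum_mul]
  have : ∀ s : ZMod p, ((ZMod.stdAddChar (-(j * s)) : ℂ) • ρ (uni s)) * eproj ρ j = eproj ρ j := by
    intro s
    rw [smul_mul_assoc, uni_mul_eproj, smul_smul, ← AddChar.map_add_eq_mul]
    simp
  simp only [this]
  rw [Finset.sum_const, Finset.card_univ, ZMod.card, ← Nat.cast_smul_eq_nsmul ℂ, smul_smul,
    inv_mul_cancel₀ hp, one_smul]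

/-- Hecke operators -/
noncomputable def hecke (j : ZMod p) (g : SL 2 p) : Matrix (Fin n) (Fin n) ℂ :=
  eproj ρ j * ρ g * eproj ρ j

lemma hecke_left (j x : ZMod p) (g : SL 2 p) :
    hecke ρ j (uni x * g) = (ZMod.stdAddChar (j * x) : ℂ) • hecke ρ j g := by
  unfold hecke
  rw [map_mul, ← mul_assoc, eproj_mul_uni, smul_mul_assoc, smul_mul_assoc]

lemma hecke_right (j x : ZMod p) (g : SL 2 p) :
    hecke ρ j (g * uni x) = (ZMod.stdAddChar (j * x) : ℂ) • hecke ρ j g := by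
  unfold hecke
  rw [map_mul, mul_assoc, mul_assoc, uni_mul_eproj, mul_smul_comm, mul_smul_comm, mul_assoc]

lemma hecke_upper (j : ZMod p) (hj : j ≠ 0) (g : SL 2 p) (hc : g 1 0 = 0)
    (ha : g 0 0 ≠ g 1 1) : hecke ρ j g = 0 := by
  have hdet := sl_det g
  rw [hc, mul_zero, sub_zero] at hdet
  -- u(x * a) g = g u(x * d)
  have key : ∀ x : ZMod p, uni (x * g 0 0) * g = g * uni (x * g 1 1) := by
    intro x
    apply sl_ext <;> simp [sl_mul, hc] <;> ring
  have h1 := hecke_left ρ j ((j * (g 0 0 - g 1 1))⁻¹ * g 0 0) g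
  rw [key, hecke_right] at h1
  by_contra hne
  have h2 := smul_left_injective ℂ hne h1
  have h3 := ZMod.injective_stdAddChar h2
  have h4 : g 0 0 - g 1 1 ≠ 0 := sub_ne_zero.2 ha
  field_simp at h3
  exact ha h3.symm

lemma hecke_tau (j : ZMod p) (hj : j ≠ 0) (g : SL 2 p) : hecke ρ j (tau g) = hecke ρ j g := by
  by_cases hc : g 1 0 = 0
  · by_cases ha : g 0 0 = g 1 1
    · congr 1
      apply sl_ext <;> simp [ha]
    · rw [hecke_upper ρ j hj g hc ha, hecke_upper ρ j hj (tau g) hc (Ne.symm ha)]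
  · have h1 := bruhat g hc
    have h2 : tau g = uni (g 1 1 / g 1 0) * wel (g 1 0) hc * uni (g 0 0 / g 1 0) := bruhat (tau g) hc
    rw [h2, hecke_right, hecke_left]
    conv_rhs => rw [h1, hecke_right, hecke_left]
    rw [smul_comm]

lemma hecke_mul (j : ZMod p) (g h : SL 2 p) : hecke ρ j g * hecke ρ j h =
    (p : ℂ)⁻¹ • ∑ s : ZMod p, (ZMod.stdAddChar (-(j * s)) : ℂ) • hecke ρ j (g * uni s * h) := by
  have : hecke ρ j g * hecke ρ j h = eproj ρ j * ρ g * eproj ρ j * ρ h * eproj ρ j := by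
    unfold hecke
    rw [← mul_assoc, ← mul_assoc, mul_assoc _ (eproj ρ j) (eproj ρ j), eproj_sq]
  rw [this]
  conv_lhs => enter [1, 1, 2]; unfold eproj
  simp only [mul_smul_comm, smul_mul_assoc, Finset.mul_sum, Finset.sum_mul]
  simp only [hecke, map_mul, mul_assoc]

lemma hecke_comm (j : ZMod p) (hj : j ≠ 0) (g h : SL 2 p) :
    hecke ρ j g * hecke ρ j h = hecke ρ j h * hecke ρ j g := by
  rw [← hecke_tau ρ j hj g, ← hecke_tau ρ j hj h, hecke_mul]
  conv_rhs => rw [hecke_tau ρ j hj g, hecke_tau ρ j hj h]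
  rw [hecke_mul]
  congr 1
  apply Finset.sum_congr rfl
  intro s _
  congr 1
  rw [← hecke_tau ρ j hj, tau_mul, tau_mul, tau_uni, tau_tau, tau_tau, mul_assoc]

/-- Irreducibility for matrix representations. -/
def IrrM (ρ : SL 2 p →* Matrix (Fin n) (Fin n) ℂ) : Prop :=
  ∀ W : Submodule ℂ (Fin n → ℂ), (∀ g, ∀ v ∈ W, (ρ g).mulVec v ∈ W) → W = ⊥ ∨ W = ⊤

lemma IrrM.span_eq_top {ρ : SL 2 p →* Matrix (Fin n) (Fin n) ℂ} (h : IrrM ρ) {v : Fin n → ℂ}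
    (hv : v ≠ 0) : Submodule.span ℂ (Set.range fun g => (ρ g).mulVec v) = ⊤ := by
  refine (h _ ?_).resolve_left ?_
  · intro g x hx
    induction hx using Submodule.span_induction with
    | mem x hx =>
      obtain ⟨k, rfl⟩ := hx
      apply Submodule.subset_span
      exact ⟨g * k, by simp [Matrix.mulVec_mulVec]⟩
    | zero => simp
    | add x y _ _ hx hy => rw [Matrix.mulVec_add]; exact add_mem hx hy
    | smul a x _ hx => rw [Matrix.mulVec_smul]; exact Submodule.smul_mem _ _ hx
  · intro hb
    have : v ∈ Submodule.span ℂ (Set.range fun g => (ρ g).mulVec v) :=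
      Submodule.subset_span ⟨1, by simp⟩
    rw [hb, Submodule.mem_bot] at this
    exact hv this

lemma eproj_rank_one {ρ : SL 2 p →* Matrix (Fin n) (Fin n) ℂ} (h : IrrM ρ) (j : ZMod p)
    (hj : j ≠ 0) : ∃ v : Fin n → ℂ, ∀ x, ∃ c : ℂ, (eproj ρ j).mulVec x = c • v := by
  by_cases hE : LinearMap.range (eproj ρ j).mulVecLin = ⊥
  · refine ⟨0, fun x => ⟨0, ?_⟩⟩
    have : (eproj ρ j).mulVecLin x ∈ LinearMap.range (eproj ρ j).mulVecLin := ⟨x, rfl⟩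
    rw [hE, Submodule.mem_bot] at this
    simpa using this
  obtain ⟨v, hv, hv0, hev⟩ := exists_common_eigenvector (hecke ρ j) (hecke_comm ρ j hj) _ hE (by
    intro g x _
    exact ⟨(ρ g * eproj ρ j).mulVec x, by simp [hecke, Matrix.mulVec_mulVec, mul_assoc]⟩)
  refine ⟨v, fun x => ?_⟩
  have hEv : (eproj ρ j).mulVec v = v := by
    obtain ⟨y, rfl⟩ := hv
    simp [Matrix.mulVec_mulVec, eproj_sq]
  have hx : x ∈ Submodule.span ℂ (Set.range fun g => (ρ g).mulVec v) := by
    rw [h.span_eq_top hv0]; trivial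
  induction hx using Submodule.span_induction with
  | mem x hx =>
    obtain ⟨g, rfl⟩ := hx
    obtain ⟨c, hc⟩ := hev g
    refine ⟨c, ?_⟩
    rw [← hc]
    conv_lhs => rw [← hEv]
    simp [hecke, Matrix.mulVec_mulVec, mul_assoc]
  | zero => exact ⟨0, by simp⟩
  | add x y _ _ hx hy =>
    obtain ⟨a, ha⟩ := hx
    obtain ⟨b, hb⟩ := hy
    exact ⟨a + b, by rw [Matrix.mulVec_add, ha, hb, add_smul]⟩
  | smul a x _ hx =>
    obtain ⟨b, hb⟩ := hx
    exact ⟨a * b, by rw [Matrix.mulVec_smul, hb, mul_smul]⟩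

/-- diagonal torus -/
def tor (a : (ZMod p)ˣ) : SL 2 p :=
  ⟨!![(a : ZMod p), 0; 0, ((a⁻¹ : (ZMod p)ˣ) : ZMod p)], by
    rw [Matrix.det_fin_two_of, mul_zero, sub_zero, Units.mul_inv]⟩

lemma tor00 (a : (ZMod p)ˣ) : (tor a) 0 0 = a := rfl
lemma tor01 (a : (ZMod p)ˣ) : (tor a) 0 1 = 0 := rfl
lemma tor10 (a : (ZMod p)ˣ) : (tor a) 1 0 = 0 := rfl
lemma tor11 (a : (ZMod p)ˣ) : (tor a) 1 1 = (a : ZMod p)⁻¹ := by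
  rw [← Units.val_inv_eq_inv_val]; rfl

lemma dim_le_of_eigen {ρ : SL 2 p →* Matrix (Fin n) (Fin n) ℂ} (h : IrrM ρ) {v : Fin n → ℂ}
    (hv : v ≠ 0) (hu : ∀ s, (ρ (uni s)).mulVec v = v)
    (ht : ∀ a, ∃ c : ℂ, (ρ (tor a)).mulVec v = c • v) : n ≤ p + 1 := by
  classical
  have hB : ∀ g : SL 2 p, g 1 0 = 0 → ∃ c : ℂ, (ρ g).mulVec v = c • v := by
    intro g hc
    have hdet := sl_det g
    rw [hc, mul_zero, sub_zero] at hdet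
    have ha : g 0 0 ≠ 0 := left_ne_zero_of_mul_eq_one hdet
    have hg : g = tor (Units.mk0 _ ha) * uni (g 0 1 / g 0 0) := by
      apply sl_ext <;> simp only [sl_mul, tor00, tor01, tor10, tor11, uni00, uni01, uni10, uni11, hc, Units.val_mk0]
      · ring
      · field_simp; ring
      · ring
      · field_simp; linear_combination hdet
    obtain ⟨c, hc⟩ := ht (Units.mk0 _ ha)
    refine ⟨c, ?_⟩
    rw [hg, map_mul, ← Matrix.mulVec_mulVec, hu, hc]
  let b : Option (ZMod p) → (Fin n → ℂ) := fun o => match o with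
    | none => v
    | some s => (ρ (uni s * wel 1 one_ne_zero)).mulVec v
  have hspan : Submodule.span ℂ (Set.range b) = ⊤ := by
    rw [eq_top_iff, ← h.span_eq_top hv, Submodule.span_le]
    rintro _ ⟨g, rfl⟩
    by_cases hc : g 1 0 = 0
    · obtain ⟨c, hc⟩ := hB g hc
      simp only [hc]
      exact Submodule.smul_mem _ _ (Submodule.subset_span ⟨none, rfl⟩)
    · set k : SL 2 p := (uni (g 0 0 / g 1 0) * wel 1 one_ne_zero)⁻¹ * g with hk
      have hg : g = (uni (g 0 0 / g 1 0) * wel 1 one_ne_zero) * k := by rw [hk]; group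
      have hk0 : k 1 0 = 0 := by
        rw [hk, sl_mul, Matrix.SpecialLinearGroup.SL2_inv_expl]
        simp [sl_mul]
        field_simp; ring
      obtain ⟨c, hc⟩ := hB k hk0
      have : (ρ g).mulVec v = c • b (some (g 0 0 / g 1 0)) := by
        rw [hg, map_mul, ← Matrix.mulVec_mulVec, hc, Matrix.mulVec_smul, ← hg]
      simp only [this]
      exact Submodule.smul_mem _ _ (Submodule.subset_span ⟨some (g 0 0 / g 1 0), rfl⟩)
  have := finrank_range_le_card (R := ℂ) b
  rw [Set.finrank, hspan, finrank_top] at this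
  simpa [ZMod.card] using this

lemma irr_dim_le {ρ : SL 2 p →* Matrix (Fin n) (Fin n) ℂ} (h : IrrM ρ) : n ≤ p + 1 := by
  by_cases hE : LinearMap.range (eproj ρ 0).mulVecLin = ⊥
  · have hz : ∀ j, ∃ v : Fin n → ℂ, ∀ x, ∃ c : ℂ, (eproj ρ j).mulVec x = c • v := by
      intro j
      by_cases hj : j = 0
      · subst hj
        refine ⟨0, fun x => ⟨0, ?_⟩⟩
        have : (eproj ρ 0).mulVecLin x ∈ LinearMap.range (eproj ρ 0).mulVecLin := ⟨x, rfl⟩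
        rw [hE, Submodule.mem_bot] at this
        simpa using this
      · exact eproj_rank_one h j hj
    choose b hb using hz
    have hspan : Submodule.span ℂ (Set.range b) = ⊤ := by
      rw [eq_top_iff]
      intro x _
      have hx : x = ∑ j, (eproj ρ j).mulVec x := by
        rw [← Matrix.sum_mulVec, eproj_sum, Matrix.one_mulVec]
      rw [hx]
      refine Submodule.sum_mem _ fun j _ => ?_
      obtain ⟨c, hc⟩ := hb j x
      rw [hc]
      exact Submodule.smul_mem _ _ (Submodule.subset_span ⟨_, rfl⟩)
    have := finrank_range_le_card (R := ℂ) b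
    rw [Set.finrank, hspan, finrank_top] at this
    simp [ZMod.card] at this
    omega
  · have hmem : ∀ v, v ∈ LinearMap.range (eproj ρ 0).mulVecLin ↔
        ∀ s, (ρ (uni s)).mulVec v = v := by
      intro v
      constructor
      · rintro ⟨y, rfl⟩ s
        simp [Matrix.mulVec_mulVec, uni_mul_eproj]
      · intro hs
        refine ⟨v, ?_⟩
        have hp : (p : ℂ) ≠ 0 := by exact_mod_cast (Fact.out : p.Prime).ne_zero
        simp only [Matrix.mulVecLin_apply, eproj, Matrix.smul_mulVec, Matrix.sum_mulVec]
        simp [hs, ZMod.card, ← Nat.cast_smul_eq_nsmul ℂ, smul_smul, hp]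
    obtain ⟨v, hv, hv0, hev⟩ := exists_common_eigenvector (fun a => ρ (tor a)) (by
      intro a b
      rw [← map_mul, ← map_mul]
      congr 1
      apply sl_ext <;> simp only [sl_mul, tor00, tor01, tor10, tor11] <;> ring) _ hE (by
      intro a x hx
      rw [hmem] at hx ⊢
      intro s
      have key : uni s * tor a = tor a * uni (s * (a : ZMod p)⁻¹ ^ 2) := by
        have ha : (a : ZMod p) ≠ 0 := a.ne_zero
        apply sl_ext <;> simp only [sl_mul, tor00, tor01, tor10, tor11, uni00, uni01, uni10, uni11]
          <;> field_simp <;> ring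
      rw [Matrix.mulVec_mulVec, ← map_mul, key, map_mul, ← Matrix.mulVec_mulVec, hx])
    exact dim_le_of_eigen h hv0 ((hmem v).1 hv) hev

end Rep

section Char

variable {p : ℕ} [Fact p.Prime] {n : ℕ}

lemma schur_scalar {ρ : SL 2 p →* Matrix (Fin n) (Fin n) ℂ} (h : IrrM ρ)
    (P : Matrix (Fin n) (Fin n) ℂ) (hP : ∀ g, ρ g * P = P * ρ g) :
    ∃ c : ℂ, P = c • (1 : Matrix (Fin n) (Fin n) ℂ) := by
  rcases Nat.eq_zero_or_pos n with hn | hn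
  · subst hn
    exact ⟨0, Subsingleton.elim _ _⟩
  have : Nontrivial (Fin n → ℂ) := by
    have : Nonempty (Fin n) := ⟨⟨0, hn⟩⟩
    infer_instance
  obtain ⟨c, hc⟩ := Module.End.exists_eigenvalue P.mulVecLin
  obtain ⟨x, hx⟩ := hc.exists_hasEigenvector
  let W : Submodule ℂ (Fin n → ℂ) := LinearMap.ker (P.mulVecLin - c • LinearMap.id)
  have hmem : ∀ y, y ∈ W ↔ P.mulVec y = c • y := by
    intro y
    simp [W, sub_eq_zero]
  have hW := h W (by
    intro g v hv
    rw [hmem] at hv ⊢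
    rw [Matrix.mulVec_mulVec, ← hP, ← Matrix.mulVec_mulVec, hv, Matrix.mulVec_smul])
  have hxW : x ∈ W := (hmem x).2 (by simpa using hx.apply_eq_smul)
  have htop : W = ⊤ := by
    refine hW.resolve_left fun hb => ?_
    rw [hb, Submodule.mem_bot] at hxW
    exact hx.2 hxW
  refine ⟨c, ?_⟩
  apply Matrix.mulVec_injective
  funext y
  have : y ∈ W := by rw [htop]; trivial
  rw [(hmem y).1 this, Matrix.smul_mulVec, Matrix.one_mulVec]

lemma schur_avg {ρ : SL 2 p →* Matrix (Fin n) (Fin n) ℂ} (h : IrrM ρ)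
    (M : Matrix (Fin n) (Fin n) ℂ) :
    (n : ℂ) • ∑ g, ρ g * M * ρ g⁻¹ =
      ((Fintype.card (SL 2 p) : ℂ) * M.trace) • (1 : Matrix (Fin n) (Fin n) ℂ) := by
  obtain ⟨c, hc⟩ := schur_scalar h (∑ g, ρ g * M * ρ g⁻¹) (by
    intro k
    rw [Finset.mul_sum, Finset.sum_mul]
    apply Fintype.sum_equiv (Equiv.mulLeft k)
    intro g
    simp only [Equiv.coe_mulLeft, mul_inv_rev, map_mul, mul_assoc]
    rw [← map_mul ρ k⁻¹ k]
    simp)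
  have htr : (n : ℂ) * c = (Fintype.card (SL 2 p) : ℂ) * M.trace := by
    have h1 := congrArg Matrix.trace hc
    rw [Matrix.trace_sum] at h1
    have h2 : ∀ g, (ρ g * M * ρ g⁻¹).trace = M.trace := by
      intro g
      rw [Matrix.trace_mul_comm, ← mul_assoc, ← map_mul]
      simp
    simp only [h2] at h1
    simp at h1
    rw [mul_comm, ← h1]
  rw [hc, smul_smul, htr]

lemma char_sq_sum {ρ : SL 2 p →* Matrix (Fin n) (Fin n) ℂ} (h : IrrM ρ)
    (hs : ∀ g, (ρ g).conjTranspose = ρ g⁻¹) :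
    ∑ g, ‖(ρ g).trace‖ ^ 2 ≤ (Fintype.card (SL 2 p) : ℝ) := by
  rcases Nat.eq_zero_or_pos n with hn | hn
  · subst hn
    simp [Matrix.trace]
  have hn' : (n : ℂ) ≠ 0 := by exact_mod_cast hn.ne'
  have key : (n : ℂ) * ∑ g, (ρ g).trace * (ρ g⁻¹).trace = n * (Fintype.card (SL 2 p) : ℂ) := by
    have e1 : ∑ g, (ρ g).trace * (ρ g⁻¹).trace
        = ∑ i, ∑ l, (∑ g, ρ g * Matrix.single i l (1 : ℂ) * ρ g⁻¹ : Matrix (Fin n) (Fin n) ℂ) i l := by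
      have : ∀ g, (ρ g).trace * (ρ g⁻¹).trace = ∑ i, ∑ l, (ρ g) i i * (ρ g⁻¹) l l := by
        intro g
        simp [Matrix.trace, Finset.sum_mul_sum]
      simp only [this, Matrix.sum_apply]
      rw [Finset.sum_comm]
      refine Finset.sum_congr rfl fun i _ => ?_
      rw [Finset.sum_comm]
      refine Finset.sum_congr rfl fun l _ => ?_
      refine Finset.sum_congr rfl fun g _ => ?_
      simp [Matrix.mul_apply, Matrix.single, Finset.sum_mul, Finset.sum_ite, ite_and]
    rw [e1]
    have e2 : ∀ i l, (n : ℂ) * (∑ g, ρ g * Matrix.single i l (1 : ℂ) * ρ g⁻¹ : Matrix (Fin n) (Fin n) ℂ) i l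
        = if i = l then (Fintype.card (SL 2 p) : ℂ) else 0 := by
      intro i l
      have := congrFun (congrFun (schur_avg h (Matrix.single i l (1 : ℂ))) i) l
      rw [Matrix.smul_apply, smul_eq_mul] at this
      rw [this]
      by_cases hil : i = l
      · subst hil; simp
      · simp [hil]
    simp only [Finset.mul_sum, e2]
    simp
  have key2 := mul_left_cancel₀ hn' key
  have : ((∑ g, ‖(ρ g).trace‖ ^ 2 : ℝ) : ℂ) = (Fintype.card (SL 2 p) : ℂ) := by
    rw [← key2]
    push_cast
    refine Finset.sum_congr rfl fun g _ => ?_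
    rw [← hs, Matrix.trace_conjTranspose, Complex.star_def, Complex.mul_conj,
      Complex.normSq_eq_norm_sq]
    push_cast; rfl
  exact le_of_eq (by exact_mod_cast this)

/-- scalar matrices -/
def IsSc (g : SL 2 p) : Prop := g 0 1 = 0 ∧ g 1 0 = 0 ∧ g 0 0 = g 1 1

open Classical in
lemma centralizer_card (g : SL 2 p) (hg : ¬ IsSc g) :
    (Finset.univ.filter fun h : SL 2 p => h * g = g * h).card ≤ 2 * p := by
  set Z := Finset.univ.filter fun h : SL 2 p => h * g = g * h with hZ
  have hcomm : ∀ h ∈ Z, h 0 1 * g 1 0 = g 0 1 * h 1 0 ∧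
      h 0 0 * g 0 1 + h 0 1 * g 1 1 = g 0 0 * h 0 1 + g 0 1 * h 1 1 ∧
      h 1 0 * g 0 0 + h 1 1 * g 1 0 = g 1 0 * h 0 0 + g 1 1 * h 1 0 := by
    intro h hh
    have hh : h * g = g * h := by simpa [hZ] using hh
    have e := fun i j => congrFun (congrFun (congrArg Subtype.val hh) i) j
    have e00 := e 0 0
    have e01 := e 0 1
    have e10 := e 1 0
    change (h * g) 0 0 = (g * h) 0 0 at e00
    change (h * g) 0 1 = (g * h) 0 1 at e01
    change (h * g) 1 0 = (g * h) 1 0 at e10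
    rw [sl_mul, sl_mul] at e00 e01 e10
    exact ⟨by linear_combination e00, e01, e10⟩
  have hk : ∃ κ : SL 2 p → ZMod p, ∀ h ∈ Z, ∀ h' ∈ Z, κ h = κ h' →
      h 0 1 = h' 0 1 ∧ h 1 0 = h' 1 0 ∧ h 0 0 - h 1 1 = h' 0 0 - h' 1 1 := by
    by_cases hc : g 1 0 = 0
    · by_cases hb : g 0 1 = 0
      · have ha : g 0 0 - g 1 1 ≠ 0 := sub_ne_zero.2 fun ha => hg ⟨hb, hc, ha⟩
        refine ⟨fun h => h 0 0 - h 1 1, fun h hh h' hh' he => ?_⟩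
        have a1 : ∀ h ∈ Z, h 0 1 = 0 ∧ h 1 0 = 0 := by
          intro h hh
          obtain ⟨x1, x2, x3⟩ := hcomm h hh
          rw [hb] at x2
          rw [hc] at x3
          constructor
          · apply (mul_eq_zero.1 (_ : (g 0 0 - g 1 1) * h 0 1 = 0)).resolve_left ha
            linear_combination -x2
          · apply (mul_eq_zero.1 (_ : (g 0 0 - g 1 1) * h 1 0 = 0)).resolve_left ha
            linear_combination x3
        exact ⟨by rw [(a1 h hh).1, (a1 h' hh').1], by rw [(a1 h hh).2, (a1 h' hh').2], he⟩
      · refine ⟨fun h => h 0 1, fun h hh h' hh' he => ?_⟩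
        simp only at he
        obtain ⟨x1, x2, x3⟩ := hcomm h hh
        obtain ⟨y1, y2, y3⟩ := hcomm h' hh'
        refine ⟨he, ?_, ?_⟩
        · apply mul_left_cancel₀ hb
          rw [← x1, ← y1, he]
        · apply mul_left_cancel₀ hb
          linear_combination x2 - y2 + (g 0 0 - g 1 1) * he
    · refine ⟨fun h => h 1 0, fun h hh h' hh' he => ?_⟩
      simp only at he
      obtain ⟨x1, x2, x3⟩ := hcomm h hh
      obtain ⟨y1, y2, y3⟩ := hcomm h' hh'
      refine ⟨?_, he, ?_⟩
      · apply mul_right_cancel₀ hc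
        rw [x1, y1, he]
      · apply mul_left_cancel₀ hc
        linear_combination y3 - x3 + (g 0 0 - g 1 1) * he
  obtain ⟨κ, hκ⟩ := hk
  have hfib : ∀ b ∈ Z.image κ, (Z.filter fun h => κ h = b).card ≤ 2 := by
    intro b hb
    obtain ⟨h0, hh0, rfl⟩ := Finset.mem_image.1 hb
    have hinj : Set.InjOn (fun h : SL 2 p => h 1 1) (Z.filter fun h => κ h = κ h0) := by
      intro h hh h' hh' he
      simp only [Finset.coe_filter, Set.mem_ofPred_eq] at hh hh'
      obtain ⟨x1, x2, x3⟩ := hκ h hh.1 h' hh'.1 (hh.2.trans hh'.2.symm)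
      simp only at he
      exact sl_ext (by linear_combination x3 + he) x1 x2 he
    rw [← Finset.card_image_of_injOn hinj]
    have hsub : (Z.filter fun h => κ h = κ h0).image (fun h : SL 2 p => h 1 1) ⊆
        {h0 1 1, -h0 0 0} := by
      intro x hx
      obtain ⟨h, hh, rfl⟩ := Finset.mem_image.1 hx
      rw [Finset.mem_filter] at hh
      obtain ⟨x1, x2, x3⟩ := hκ h hh.1 h0 hh0 hh.2
      have d1 := sl_det h
      have d2 := sl_det h0
      have : (h 1 1 - h0 1 1) * (h 1 1 + h0 0 0) = 0 := by
        rw [x1, x2] at d1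
        linear_combination d1 - d2 - h 1 1 * x3
      rcases mul_eq_zero.1 this with e | e
      · simp [sub_eq_zero.1 e]
      · simp [eq_neg_of_add_eq_zero_left e]
    exact (Finset.card_le_card hsub).trans Finset.card_le_two
  calc Z.card ≤ 2 * (Z.image κ).card := Finset.card_le_mul_card_image _ _ hfib
    _ ≤ 2 * p := by
      gcongr
      exact (Finset.card_le_univ _).trans (by rw [ZMod.card])

lemma char_bound {ρ : SL 2 p →* Matrix (Fin n) (Fin n) ℂ} (h : IrrM ρ)
    (hs : ∀ g, (ρ g).conjTranspose = ρ g⁻¹) (g : SL 2 p) (hg : ¬ IsSc g) :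
    ‖(ρ g).trace‖ ^ 2 ≤ 2 * (p : ℝ) := by
  classical
  have h1 : ∀ x, ‖(ρ (x * g * x⁻¹)).trace‖ ^ 2 = ‖(ρ g).trace‖ ^ 2 := by
    intro x
    rw [map_mul, map_mul, Matrix.trace_mul_comm, ← mul_assoc, ← map_mul]
    simp
  have h2 : ∑ x : SL 2 p, ‖(ρ (x * g * x⁻¹)).trace‖ ^ 2
      = (Fintype.card (SL 2 p) : ℝ) * ‖(ρ g).trace‖ ^ 2 := by
    simp only [h1]
    simp
  have h3 : ∑ x : SL 2 p, ‖(ρ (x * g * x⁻¹)).trace‖ ^ 2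
      = ∑ y : SL 2 p, ((Finset.univ.filter fun x : SL 2 p => x * g * x⁻¹ = y).card : ℝ)
          * ‖(ρ y).trace‖ ^ 2 := by
    rw [← Finset.sum_fiberwise Finset.univ (fun x : SL 2 p => x * g * x⁻¹)]
    refine Finset.sum_congr rfl fun y _ => ?_
    rw [Finset.sum_congr rfl (g := fun _ => ‖(ρ y).trace‖ ^ 2)]
    · simp
    · intro x hx
      rw [(Finset.mem_filter.1 hx).2]
  have h4 : ∀ y : SL 2 p, (Finset.univ.filter fun x : SL 2 p => x * g * x⁻¹ = y).card ≤ 2 * p := by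
    intro y
    rcases (Finset.univ.filter fun x : SL 2 p => x * g * x⁻¹ = y).eq_empty_or_nonempty with he | he
    · rw [he]; simp
    · obtain ⟨x0, hx0⟩ := he
      have hx0 := (Finset.mem_filter.1 hx0).2
      refine le_trans ?_ (centralizer_card g hg)
      apply Finset.card_le_card_of_injOn (fun x => x0⁻¹ * x)
      · intro x hx
        have hx := (Finset.mem_filter.1 hx).2
        simp only [Finset.coe_filter, Finset.mem_univ, true_and, Set.mem_ofPred_eq]
        have : x * g * x⁻¹ = x0 * g * x0⁻¹ := hx.trans hx0.symm
        have : x * g = x0 * g * x0⁻¹ * x := by rw [← this]; group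
        rw [mul_assoc, this]; group
      · intro x _ y _ hxy
        exact mul_left_cancel hxy
  have hpos : (0 : ℝ) < Fintype.card (SL 2 p) := by exact_mod_cast Fintype.card_pos
  have h5 : (Fintype.card (SL 2 p) : ℝ) * ‖(ρ g).trace‖ ^ 2
      ≤ (Fintype.card (SL 2 p) : ℝ) * (2 * p) := by
    rw [← h2, h3]
    calc _ ≤ ∑ y : SL 2 p, (2 * p : ℝ) * ‖(ρ y).trace‖ ^ 2 := by
          refine Finset.sum_le_sum fun y _ => ?_
          gcongr
          exact_mod_cast h4 y
      _ = (2 * p : ℝ) * ∑ y : SL 2 p, ‖(ρ y).trace‖ ^ 2 := by rw [Finset.mul_sum]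
      _ ≤ (2 * p : ℝ) * (Fintype.card (SL 2 p) : ℝ) := by
          gcongr
          exact char_sq_sum h hs
      _ = _ := mul_comm _ _
  exact le_of_mul_le_mul_left h5 hpos

end Char

section Words

variable {d : ℕ}

/-- inverse letter -/
def bar (x : Fin d × Bool) : Fin d × Bool := (x.1, !x.2)

lemma bar_bar (x : Fin d × Bool) : bar (bar x) = x := by simp [bar]

/-- letter evaluation -/
def lett {G : Type*} [Group G] (S : Fin d → G) (x : Fin d × Bool) : G :=
  if x.2 then S x.1 else (S x.1)⁻¹

lemma lett_bar {G : Type*} [Group G] (S : Fin d → G) (x : Fin d × Bool) :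
    lett S (bar x) = (lett S x)⁻¹ := by
  obtain ⟨i, b⟩ := x
  cases b <;> simp [lett, bar]

/-- word evaluation -/
def ev {G : Type*} [Group G] (S : Fin d → G) (l : List (Fin d × Bool)) : G :=
  (l.map (lett S)).prod

/-- push a letter, cancelling if possible -/
def push (x : Fin d × Bool) : List (Fin d × Bool) → List (Fin d × Bool)
  | [] => [x]
  | y :: t => if y = bar x then t else x :: y :: t

lemma push_cons (x y : Fin d × Bool) (t) :
    push x (y :: t) = if y = bar x then t else x :: y :: t := rfl

/-- free reduction -/
def red : List (Fin d × Bool) → List (Fin d × Bool)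
  | [] => []
  | x :: t => push x (red t)

/-- reducedness -/
def IsRed (l : List (Fin d × Bool)) : Prop := List.IsChain (fun a b => b ≠ bar a) l

lemma ev_cons {G : Type*} [Group G] (S : Fin d → G) (x) (l : List (Fin d × Bool)) :
    ev S (x :: l) = lett S x * ev S l := by simp [ev]

lemma ev_push {G : Type*} [Group G] (S : Fin d → G) (x) (l : List (Fin d × Bool)) :
    ev S (push x l) = lett S x * ev S l := by
  cases l with
  | nil => simp [push, ev]
  | cons y t =>
    rw [push_cons]
    split_ifs with h
    · rw [ev_cons, h, lett_bar]; simp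
    · rw [ev_cons]

lemma ev_red {G : Type*} [Group G] (S : Fin d → G) (l : List (Fin d × Bool)) :
    ev S (red l) = ev S l := by
  induction l with
  | nil => rfl
  | cons x t ih => rw [red, ev_push, ih, ev_cons]

lemma isRed_push (x) (l : List (Fin d × Bool)) (h : IsRed l) : IsRed (push x l) := by
  cases l with
  | nil => simp [push, IsRed]
  | cons y t =>
    rw [push_cons]
    split_ifs with hy
    · exact List.IsChain.tail h
    · exact List.IsChain.cons_cons hy h

lemma isRed_red (l : List (Fin d × Bool)) : IsRed (red l) := by
  induction l with
  | nil => simp [red, IsRed]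
  | cons x t ih => exact isRed_push x _ ih

lemma length_push (x) (l : List (Fin d × Bool)) : (push x l).length ≤ l.length + 1 := by
  cases l with
  | nil => simp [push]
  | cons y t =>
    rw [push_cons]
    split_ifs <;> simp
    omega

lemma length_red (l : List (Fin d × Bool)) : (red l).length ≤ l.length := by
  induction l with
  | nil => simp [red]
  | cons x t ih =>
    have := length_push x (red t)
    simp only [red, List.length_cons]
    omega

lemma weight_step (hd : 1 ≤ d) (q : ℝ) (hq : 0 < q) (hq2 : q ^ 2 = 2 * d - 1)
    (l : List (Fin d × Bool)) :
    ∑ x, (q⁻¹) ^ (push x l).length ≤ 2 * q * (q⁻¹) ^ l.length := by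
  classical
  have hd' : (1 : ℝ) ≤ d := by exact_mod_cast hd
  cases l with
  | nil =>
    simp only [push, List.length_cons, List.length_nil, Finset.sum_const, Finset.card_univ,
      Fintype.card_prod, Fintype.card_fin, Fintype.card_bool, nsmul_eq_mul]
    push_cast
    simp only [zero_add, pow_one, pow_zero, mul_one]
    rw [← div_eq_mul_inv, div_le_iff₀ hq]
    nlinarith
  | cons y t =>
    have h1 : ∀ x, (q⁻¹) ^ (push x (y :: t)).length =
        (q⁻¹) ^ (t.length + 2) + if x = bar y then (q⁻¹) ^ t.length - (q⁻¹) ^ (t.length + 2) else 0 := by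
      intro x
      rw [push_cons]
      by_cases hx : x = bar y
      · rw [if_pos hx, hx, bar_bar, if_pos rfl]; ring
      · have : y ≠ bar x := fun h => hx (by rw [h, bar_bar])
        rw [if_neg hx, if_neg this]; simp
    simp only [h1, Finset.sum_add_distrib, Finset.sum_ite_eq', Finset.mem_univ, if_true,
      Finset.sum_const, Finset.card_univ, Fintype.card_prod, Fintype.card_fin, Fintype.card_bool,
      nsmul_eq_mul, List.length_cons]
    push_cast
    have h2 : (q⁻¹) ^ (t.length + 2) = (q⁻¹) ^ t.length / q ^ 2 := by
      rw [pow_add, inv_pow q 2, div_eq_mul_inv]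
    have h3 : (q⁻¹) ^ (t.length + 1) = (q⁻¹) ^ t.length / q := by
      rw [pow_succ, div_eq_mul_inv]
    rw [h2, h3]
    apply le_of_eq
    have : (d : ℝ) * 2 = q ^ 2 + 1 := by linarith
    rw [this]
    field_simp
    ring

lemma sum_words_succ {M : Type*} [AddCommMonoid M] {α : Type*} [Fintype α] (m : ℕ)
    (f : List α → M) :
    ∑ w : Fin (m + 1) → α, f (List.ofFn w) =
      ∑ w : Fin m → α, ∑ x, f (x :: List.ofFn w) := by
  rw [← (Fin.consEquiv (fun _ => α)).sum_comp, Fintype.sum_prod_type, Finset.sum_comm]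
  refine Finset.sum_congr rfl fun w _ => Finset.sum_congr rfl fun x _ => ?_
  simp [Fin.consEquiv, List.ofFn_succ]

lemma weight_sum (hd : 1 ≤ d) (q : ℝ) (hq : 0 < q) (hq2 : q ^ 2 = 2 * d - 1) (m : ℕ) :
    ∑ w : Fin m → Fin d × Bool, (q⁻¹) ^ (red (List.ofFn w)).length ≤ (2 * q) ^ m := by
  induction m with
  | zero => simp [red]
  | succ m ih =>
    rw [sum_words_succ m (fun l => (q⁻¹) ^ (red l).length)]
    calc _ ≤ ∑ w : Fin m → Fin d × Bool, 2 * q * (q⁻¹) ^ (red (List.ofFn w)).length := by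
          refine Finset.sum_le_sum fun w _ => ?_
          exact weight_step hd q hq hq2 _
      _ = 2 * q * ∑ w : Fin m → Fin d × Bool, (q⁻¹) ^ (red (List.ofFn w)).length := by
          rw [Finset.mul_sum]
      _ ≤ 2 * q * (2 * q) ^ m := by gcongr
      _ = _ := by ring

lemma trivial_count (hd : 1 ≤ d) (q : ℝ) (hq : 0 < q) (hq2 : q ^ 2 = 2 * d - 1) (m : ℕ) :
    ((Finset.univ.filter fun w : Fin m → Fin d × Bool => red (List.ofFn w) = []).card : ℝ)
      ≤ (2 * q) ^ m := by
  refine le_trans ?_ (weight_sum hd q hq hq2 m)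
  rw [Finset.card_filter]
  push_cast
  refine Finset.sum_le_sum fun w _ => ?_
  split_ifs with h
  · simp [h]
  · positivity

lemma pow_expand {G : Type*} [Group G] {n : ℕ} (ρ : G →* Matrix (Fin n) (Fin n) ℂ)
    (S : Fin d → G) (m : ℕ) :
    (∑ x, ρ (lett S x)) ^ m = ∑ w : Fin m → Fin d × Bool, ρ (ev S (List.ofFn w)) := by
  induction m with
  | zero => simp [ev]
  | succ m ih =>
    rw [sum_words_succ m (fun l => ρ (ev S l)), pow_succ', ih, Finset.sum_mul_sum,
      Finset.sum_comm]
    simp [ev_cons]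

end Words

section Poly

open Polynomial

variable {d : ℕ} {p : ℕ} [Fact p.Prime]

/-- the tuple parametrized by `X` and `t` -/
def tup (X : Fin d × Bool → SL 2 p) (t : ZMod p) : Fin d → SL 2 p :=
  fun i => X (i, true) * uni t * (X (i, false))⁻¹

/-- sign of a letter -/
def sgn (p : ℕ) (x : Fin d × Bool) : ZMod p := if x.2 then 1 else -1

lemma sgn_ne (x : Fin d × Bool) : sgn p x ≠ 0 := by
  unfold sgn; split_ifs <;> simp

lemma uni_inv (t : ZMod p) : (uni t)⁻¹ = uni (-t) := by
  rw [inv_eq_iff_mul_eq_one, ← uni_add, add_neg_cancel, uni_zero]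

lemma lett_tup (X : Fin d × Bool → SL 2 p) (t : ZMod p) (x : Fin d × Bool) :
    lett (tup X t) x = X x * uni (sgn p x * t) * (X (bar x))⁻¹ := by
  obtain ⟨i, b⟩ := x
  cases b
  · simp [lett, tup, sgn, bar, uni_inv, mul_assoc]
  · simp [lett, tup, sgn, bar]

/-- general position -/
def Good (X : Fin d × Bool → SL 2 p) : Prop :=
  ∀ a b, a ≠ b → ((X a)⁻¹ * X b) 1 0 ≠ 0

lemma poly_step (σ : ZMod p) (hσ : σ ≠ 0) (k : ℕ) (N : ZMod p → SL 2 p)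
    (r : Fin 2 → Fin 2 → (ZMod p)[X])
    (hr : ∀ t i j, (N t) i j = (r i j).eval t) (hdeg : ∀ i j, (r i j).natDegree ≤ k)
    (hco : ∃ j, (r 1 j).coeff k ≠ 0) :
    ∃ q : Fin 2 → Fin 2 → (ZMod p)[X],
      (∀ t i j, (uni (σ * t) * N t) i j = (q i j).eval t) ∧
      (∀ j, (q 0 j).natDegree ≤ k + 1) ∧ (∀ j, (q 1 j).natDegree < k + 1) ∧
      ∃ j, (q 0 j).coeff (k + 1) ≠ 0 := by
  refine ⟨fun i j => if i = 0 then r 0 j + C σ * (X * r 1 j) else r 1 j, ?_, ?_, ?_, ?_⟩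
  · intro t i j
    fin_cases i
    · simp only [Fin.zero_eta, if_true, eval_add, eval_mul, eval_C, eval_X, ← hr]
      rw [sl_mul]; simp [mul_assoc]
    · simp only [Fin.mk_one, one_ne_zero, if_false, ← hr]
      rw [sl_mul]; simp
  · intro j
    simp only [if_true]
    apply natDegree_add_le_of_degree_le
    · exact (hdeg 0 j).trans (by omega)
    · refine (natDegree_C_mul_le _ _).trans (natDegree_mul_le.trans ?_)
      have := hdeg 1 j
      have := natDegree_X_le (R := ZMod p)
      omega
  · intro j
    simp only [one_ne_zero, if_false]
    have := hdeg 1 j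
    omega
  · obtain ⟨j, hj⟩ := hco
    refine ⟨j, ?_⟩
    simp only [if_true, coeff_add, coeff_C_mul, coeff_X_mul]
    rw [coeff_eq_zero_of_natDegree_lt (lt_of_le_of_lt (hdeg 0 j) (Nat.lt_succ_self k)), zero_add]
    exact mul_ne_zero hσ hj

lemma row_ne (g : SL 2 p) : ∃ j, g 1 j ≠ 0 := by
  by_contra h
  push Not at h
  have := sl_det g
  rw [h 0, h 1] at this
  simp at this

lemma poly_word (X : Fin d × Bool → SL 2 p) (hX : Good X) (l : List (Fin d × Bool)) :
    ∀ x, IsRed (x :: l) →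
    ∃ q : Fin 2 → Fin 2 → (ZMod p)[X],
      (∀ t i j, ((X x)⁻¹ * ev (tup X t) (x :: l)) i j = (q i j).eval t) ∧
      (∀ j, (q 0 j).natDegree ≤ l.length + 1) ∧ (∀ j, (q 1 j).natDegree < l.length + 1) ∧
      ∃ j, (q 0 j).coeff (l.length + 1) ≠ 0 := by
  induction l with
  | nil =>
    intro x _
    obtain ⟨q, h1, h2, h3, h4⟩ := poly_step (sgn p x) (sgn_ne x) 0 (fun _ => (X (bar x))⁻¹)
      (fun i j => C ((X (bar x))⁻¹ i j)) (by simp) (by simp) (by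
        obtain ⟨j, hj⟩ := row_ne (X (bar x))⁻¹
        exact ⟨j, by rw [coeff_C_zero]; exact hj⟩)
    refine ⟨q, ?_, h2, h3, h4⟩
    intro t i j
    rw [← h1, ev_cons, lett_tup]
    simp [ev, mul_assoc]
  | cons y l ih =>
    intro x hred
    have hy : y ≠ bar x := by
      simp only [IsRed, List.isChain_cons_cons] at hred
      exact hred.1
    have hred' : IsRed (y :: l) := List.IsChain.tail hred
    obtain ⟨q', a1, a2, a3, a4⟩ := ih y hred'
    set M : SL 2 p := (X (bar x))⁻¹ * X y with hM
    have hM10 : M 1 0 ≠ 0 := hX _ _ (Ne.symm hy)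
    obtain ⟨q, h1, h2, h3, h4⟩ := poly_step (sgn p x) (sgn_ne x) (l.length + 1)
      (fun t => M * ((X y)⁻¹ * ev (tup X t) (y :: l)))
      (fun i j => C (M i 0) * q' 0 j + C (M i 1) * q' 1 j)
      (by
        intro t i j
        rw [sl_mul, a1, a1]
        simp)
      (by
        intro i j
        apply natDegree_add_le_of_degree_le
        · exact (natDegree_C_mul_le _ _).trans (a2 j)
        · exact (natDegree_C_mul_le _ _).trans (a3 j).le)
      (by
        obtain ⟨j, hj⟩ := a4
        refine ⟨j, ?_⟩
        rw [coeff_add, coeff_C_mul, coeff_C_mul, coeff_eq_zero_of_natDegree_lt (a3 j), mul_zero,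
          add_zero]
        exact mul_ne_zero hM10 hj)
    refine ⟨q, ?_, h2, h3, h4⟩
    intro t i j
    rw [← h1, ev_cons (tup X t) x, lett_tup, hM]
    group

open Classical in
lemma good_count (X : Fin d × Bool → SL 2 p) (hX : Good X) (l : List (Fin d × Bool))
    (hl : l ≠ []) (hred : IsRed l) :
    (Finset.univ.filter fun t : ZMod p => IsSc (ev (tup X t) l)).card ≤ l.length := by
  obtain ⟨x, l, rfl⟩ := List.exists_cons_of_ne_nil hl
  obtain ⟨q, a1, a2, a3, j, a4⟩ := poly_word X hX l x hred
  set g := X x with hg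
  set m := l.length + 1 with hm
  have hev : ∀ t i j, (ev (tup X t) (x :: l)) i j
      = (C (g i 0) * q 0 j + C (g i 1) * q 1 j).eval t := by
    intro t i j
    have : ev (tup X t) (x :: l) = g * (g⁻¹ * ev (tup X t) (x :: l)) := by group
    rw [this, sl_mul, a1, a1]
    simp
  set P : Fin 2 → Fin 2 → (ZMod p)[X] := fun i j => C (g i 0) * q 0 j + C (g i 1) * q 1 j with hP
  have hdeg : ∀ i j, (P i j).natDegree ≤ m := by
    intro i j
    apply natDegree_add_le_of_degree_le
    · exact (natDegree_C_mul_le _ _).trans (a2 j)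
    · exact (natDegree_C_mul_le _ _).trans (a3 j).le
  have hco : ∀ i j, (P i j).coeff m = g i 0 * (q 0 j).coeff m := by
    intro i j
    simp only [hP]
    rw [coeff_add, coeff_C_mul, coeff_C_mul, coeff_eq_zero_of_natDegree_lt (a3 j), mul_zero,
      add_zero]
  have hmain : ∃ f : (ZMod p)[X], f ≠ 0 ∧ f.natDegree ≤ m ∧
      ∀ t, IsSc (ev (tup X t) (x :: l)) → f.eval t = 0 := by
    by_cases h01 : (P 0 1).coeff m = 0
    · by_cases h10 : (P 1 0).coeff m = 0
      · refine ⟨P 0 0 - P 1 1, ?_, ?_, ?_⟩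
        · intro h0
          have h2 := congrArg (fun f => f.coeff m) h0
          simp only [coeff_sub, coeff_zero, hco] at h2
          rw [hco] at h01 h10
          have hdet := sl_det g
          have hq : (q 0 0).coeff m = 0 ∧ (q 0 1).coeff m = 0 := by
            rcases mul_eq_zero.1 h01 with e | e <;> rcases mul_eq_zero.1 h10 with e' | e'
            · rw [e, e'] at hdet; simp at hdet
            · rw [e] at h2 hdet
              have : g 1 0 ≠ 0 := by intro h; rw [h] at hdet; simp at hdet
              refine ⟨e', ?_⟩
              simpa [this] using h2
            · rw [e'] at h2 hdet
              have : g 0 0 ≠ 0 := by intro h; rw [h] at hdet; simp at hdet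
              refine ⟨?_, e⟩
              simpa [this] using h2
            · exact ⟨e', e⟩
          fin_cases j
          · exact a4 hq.1
          · exact a4 hq.2
        · exact (natDegree_sub_le _ _).trans (max_le (hdeg _ _) (hdeg _ _))
        · intro t ht
          rw [eval_sub, ← hev, ← hev, ht.2.2, sub_self]
      · exact ⟨P 1 0, fun h => h10 (by rw [h, coeff_zero]), hdeg _ _, fun t ht => by
          rw [← hev, ht.2.1]⟩
    · exact ⟨P 0 1, fun h => h01 (by rw [h, coeff_zero]), hdeg _ _, fun t ht => by
          rw [← hev, ht.1]⟩
  obtain ⟨f, hf0, hfd, hf⟩ := hmain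
  have hsub : (Finset.univ.filter fun t : ZMod p => IsSc (ev (tup X t) (x :: l)))
      ⊆ f.roots.toFinset := by
    intro t ht
    rw [Finset.mem_filter] at ht
    rw [Multiset.mem_toFinset, mem_roots hf0]
    exact hf t ht.2
  calc _ ≤ f.roots.toFinset.card := Finset.card_le_card hsub
    _ ≤ Multiset.card f.roots := Multiset.toFinset_card_le _
    _ ≤ f.natDegree := card_roots' f
    _ ≤ _ := hfd

end Poly

section Count

variable {d : ℕ} {p : ℕ} [Fact p.Prime]

/-- lower unipotent -/
def low (s : ZMod p) : SL 2 p := ⟨!![1, 0; s, 1], by simp [Matrix.det_fin_two]⟩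

@[simp] lemma low00 (s : ZMod p) : (low s) 0 0 = 1 := rfl
@[simp] lemma low01 (s : ZMod p) : (low s) 0 1 = 0 := rfl
@[simp] lemma low10 (s : ZMod p) : (low s) 1 0 = s := rfl
@[simp] lemma low11 (s : ZMod p) : (low s) 1 1 = 1 := rfl

lemma borel_low {k k' : SL 2 p} (hk : k 1 0 = 0) (hk' : k' 1 0 = 0) {s s' : ZMod p}
    (h : k * low s = k' * low s') : s = s' := by
  have h11 := congrArg (fun g : SL 2 p => g 1 1) h
  have h10 := congrArg (fun g : SL 2 p => g 1 0) h
  simp only [sl_mul, low00, low01, low10, low11, hk, hk'] at h11 h10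
  have hdet := sl_det k
  rw [hk, mul_zero, sub_zero] at hdet
  have hne : k 1 1 ≠ 0 := right_ne_zero_of_mul_eq_one hdet
  have e : k 1 1 = k' 1 1 := by linear_combination h11
  apply mul_left_cancel₀ hne
  rw [← e] at h10
  linear_combination h10

open Classical in
lemma bad_pair (a b : Fin d × Bool) (hab : a ≠ b) :
    (Finset.univ.filter fun X : Fin d × Bool → SL 2 p => ((X a)⁻¹ * X b) 1 0 = 0).card * p
      ≤ Fintype.card (Fin d × Bool → SL 2 p) := by
  set Z := Finset.univ.filter fun X : Fin d × Bool → SL 2 p => ((X a)⁻¹ * X b) 1 0 = 0 with hZ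
  have : Z.card * p = (Z ×ˢ (Finset.univ : Finset (ZMod p))).card := by
    rw [Finset.card_product, Finset.card_univ, ZMod.card]
  rw [this, ← Finset.card_univ]
  apply Finset.card_le_card_of_injOn (fun y => Function.update y.1 b (y.1 b * low y.2))
  · intro _ _; simp
  · rintro ⟨X, s⟩ hX ⟨X', s'⟩ hX' he
    simp only [hZ, Finset.coe_product, Set.mem_prod, Finset.coe_filter, Set.mem_ofPred_eq,
      Finset.mem_univ, true_and] at hX hX'
    simp only at he
    have ha : X a = X' a := by
      have := congrFun he a
      simpa [Function.update_of_ne hab] using this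
    have hb : X b * low s = X' b * low s' := by
      have := congrFun he b
      simpa using this
    have hs : s = s' := by
      apply borel_low hX.1 hX'.1
      rw [mul_assoc, hb, ha, mul_assoc]
    subst hs
    have hb' : X b = X' b := mul_right_cancel hb
    ext1
    · funext c
      by_cases hc : c = b
      · rw [hc]; exact hb'
      · have := congrFun he c
        simpa [Function.update_of_ne hc] using this
    · rfl

open Classical in
lemma bad_count :
    (Finset.univ.filter fun X : Fin d × Bool → SL 2 p => ¬ Good X).card * p
      ≤ (2 * d) ^ 2 * Fintype.card (Fin d × Bool → SL 2 p) := by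
  have hsub : (Finset.univ.filter fun X : Fin d × Bool → SL 2 p => ¬ Good X) ⊆
      (Finset.univ.filter fun c : (Fin d × Bool) × (Fin d × Bool) => c.1 ≠ c.2).biUnion fun c =>
        Finset.univ.filter fun X : Fin d × Bool → SL 2 p => ((X c.1)⁻¹ * X c.2) 1 0 = 0 := by
    intro X hX
    rw [Finset.mem_filter] at hX
    have hX := hX.2
    unfold Good at hX
    push Not at hX
    obtain ⟨a, b, hab, h⟩ := hX
    rw [Finset.mem_biUnion]
    exact ⟨(a, b), by simpa using hab, by simpa using h⟩
  calc _ ≤ (∑ c ∈ Finset.univ.filter fun c : (Fin d × Bool) × (Fin d × Bool) => c.1 ≠ c.2,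
        (Finset.univ.filter fun X : Fin d × Bool → SL 2 p => ((X c.1)⁻¹ * X c.2) 1 0 = 0).card) * p := by
        gcongr
        exact (Finset.card_le_card hsub).trans Finset.card_biUnion_le
    _ ≤ ∑ c ∈ Finset.univ.filter fun c : (Fin d × Bool) × (Fin d × Bool) => c.1 ≠ c.2,
        Fintype.card (Fin d × Bool → SL 2 p) := by
        rw [Finset.sum_mul]
        refine Finset.sum_le_sum fun c hc => ?_
        exact bad_pair c.1 c.2 (Finset.mem_filter.1 hc).2
    _ ≤ _ := by
        rw [Finset.sum_const, smul_eq_mul]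
        gcongr
        refine (Finset.card_le_univ _).trans ?_
        simp only [Fintype.card_prod, Fintype.card_fin, Fintype.card_bool]
        apply le_of_eq; ring

/-- splitting -/
def splitEquiv (G : Type*) (d : ℕ) : (Fin d × Bool → G) ≃ (Fin d → G) × (Fin d → G) where
  toFun X := (fun i => X (i, true), fun i => X (i, false))
  invFun P := fun x => if x.2 then P.1 x.1 else P.2 x.1
  left_inv X := by
    funext ⟨i, b⟩
    cases b <;> simp
  right_inv P := by simp

lemma tup_sum (t : ZMod p) (F : (Fin d → SL 2 p) → ℕ) :
    ∑ X : Fin d × Bool → SL 2 p, F (tup X t) = Fintype.card (Fin d → SL 2 p) * ∑ S, F S := by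
  rw [← (splitEquiv (SL 2 p) d).symm.sum_comp, Fintype.sum_prod_type]
  have : ∀ A : Fin d → SL 2 p, ∑ B : Fin d → SL 2 p,
      F (tup ((splitEquiv (SL 2 p) d).symm (A, B)) t) = ∑ S, F S := by
    intro A
    apply Fintype.sum_equiv ((Equiv.inv _).trans (Equiv.mulLeft (A * fun _ => uni t)))
    intro B
    rfl
  simp only [this]
  simp

open Classical in
lemma sc_count (l : List (Fin d × Bool)) (hl : l ≠ []) (hred : IsRed l) :
    (Finset.univ.filter fun S : Fin d → SL 2 p => IsSc (ev S l)).card * p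
      ≤ ((2 * d) ^ 2 + l.length) * Fintype.card (Fin d → SL 2 p) := by
  set K := Fintype.card (Fin d → SL 2 p) with hK
  have hKpos : 0 < K := Fintype.card_pos
  have hKK : Fintype.card (Fin d × Bool → SL 2 p) = K * K := by
    rw [Fintype.card_congr (splitEquiv (SL 2 p) d), Fintype.card_prod]
  set F : (Fin d → SL 2 p) → ℕ := fun S => if IsSc (ev S l) then 1 else 0 with hF
  have hN : (Finset.univ.filter fun S : Fin d → SL 2 p => IsSc (ev S l)).card = ∑ S, F S := by
    rw [Finset.card_filter]
  have h1 : ∑ t : ZMod p, ∑ X : Fin d × Bool → SL 2 p, F (tup X t) = p * (K * ∑ S, F S) := by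
    simp only [tup_sum]
    rw [Finset.sum_const, Finset.card_univ, ZMod.card, smul_eq_mul]
  rw [Finset.sum_comm] at h1
  have h2 : ∀ X : Fin d × Bool → SL 2 p, ∑ t : ZMod p, F (tup X t)
      ≤ l.length + if ¬ Good X then p else 0 := by
    intro X
    have e : ∑ t : ZMod p, F (tup X t)
        = (Finset.univ.filter fun t : ZMod p => IsSc (ev (tup X t) l)).card := by
      rw [Finset.card_filter]
    rw [e]
    by_cases hX : Good X
    · simpa [hX] using good_count X hX l hl hred
    · rw [if_pos hX]
      refine (Finset.card_le_univ _).trans ?_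
      rw [ZMod.card]; omega
  have h3 : p * (K * ∑ S, F S) ≤ K * K * l.length + (2 * d) ^ 2 * (K * K) := by
    rw [← h1]
    refine (Finset.sum_le_sum fun X _ => h2 X).trans ?_
    rw [Finset.sum_add_distrib, Finset.sum_const, Finset.card_univ, smul_eq_mul, hKK,
      ← Finset.sum_filter, Finset.sum_const, smul_eq_mul]
    have := bad_count (d := d) (p := p)
    rw [hKK] at this
    omega
  rw [hN]
  apply Nat.le_of_mul_le_mul_left _ hKpos
  calc K * ((∑ S, F S) * p) = p * (K * ∑ S, F S) := by ring
    _ ≤ _ := h3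
    _ = _ := by ring

end Count

section Final

variable {d : ℕ} {p : ℕ} [Fact p.Prime] {n : ℕ}

/-- the matrix representation underlying a unitary one -/
def toM (π : SL 2 p →* Matrix.unitaryGroup (Fin n) ℂ) : SL 2 p →* Matrix (Fin n) (Fin n) ℂ :=
  (Matrix.unitaryGroup (Fin n) ℂ).subtype.comp π

lemma toM_apply (π : SL 2 p →* Matrix.unitaryGroup (Fin n) ℂ) (g) : toM π g = (π g).1 := rfl

lemma toM_star (π : SL 2 p →* Matrix.unitaryGroup (Fin n) ℂ) (g) :
    (toM π g).conjTranspose = toM π g⁻¹ := by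
  rw [toM_apply, toM_apply, map_inv]
  rfl

lemma toM_inv (π : SL 2 p →* Matrix.unitaryGroup (Fin n) ℂ) (g) :
    (toM π g)⁻¹ = toM π g⁻¹ := by
  apply Matrix.inv_eq_right_inv
  rw [← map_mul]; simp

lemma amat_eq (π : SL 2 p →* Matrix.unitaryGroup (Fin n) ℂ) (S : Fin d → SL 2 p) :
    Amat π S = ∑ x, toM π (lett S x) := by
  unfold Amat
  rw [Fintype.sum_prod_type]
  refine Finset.sum_congr rfl fun i _ => ?_
  rw [Fintype.sum_bool]
  simp only [lett, if_true, Bool.false_eq_true, if_false]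
  rw [← toM_inv, toM_apply]

lemma amat_herm (π : SL 2 p →* Matrix.unitaryGroup (Fin n) ℂ) (S : Fin d → SL 2 p) :
    (Amat π S).IsHermitian := by
  unfold Amat Matrix.IsHermitian
  rw [Matrix.conjTranspose_sum]
  refine Finset.sum_congr rfl fun i _ => ?_
  rw [Matrix.conjTranspose_add, ← toM_apply, toM_inv, toM_star, toM_star, inv_inv, add_comm]

lemma toM_trace_le (π : SL 2 p →* Matrix.unitaryGroup (Fin n) ℂ) (g) :
    ‖(toM π g).trace‖ ≤ n := by
  unfold Matrix.trace
  refine (norm_sum_le _ _).trans ?_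
  refine (Finset.sum_le_sum (g := fun _ => (1 : ℝ)) fun i _ => ?_).trans (by simp)
  exact entry_norm_bound_of_unitary (π g).2 i i

lemma exc_bound {A : Matrix (Fin n) (Fin n) ℂ} (hA : A.IsHermitian) (t : ℝ) (ht : 0 ≤ t) (k : ℕ) :
    (excCount A t : ℝ) * t ^ (2 * k) ≤ ‖(A ^ (2 * k)).trace‖ := by
  classical
  have htr : (A ^ (2 * k)).trace = ((∑ i, hA.eigenvalues i ^ (2 * k) : ℝ) : ℂ) := by
    conv_lhs => rw [hA.spectral_theorem, ← map_pow, Matrix.diagonal_pow]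
    rw [Unitary.conjStarAlgAut_apply, Matrix.trace_mul_comm, ← mul_assoc]
    simp [Matrix.trace_diagonal]
  rw [htr, Complex.norm_real]
  refine le_trans ?_ (le_abs_self _)
  have : excCount A t = (Finset.univ.filter fun j : Fin n => t < |hA.eigenvalues j|).card := by
    unfold excCount
    rw [dif_pos hA]
  rw [this, Finset.card_filter]
  push_cast
  rw [Finset.sum_mul]
  refine Finset.sum_le_sum fun i _ => ?_
  have hnn : 0 ≤ hA.eigenvalues i ^ (2 * k) := by rw [pow_mul]; positivity
  split_ifs with h
  · rw [one_mul, ← Even.pow_abs (even_two_mul k) (hA.eigenvalues i)]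
    gcongr
  · simpa using hnn

lemma word_avg (π : SL 2 p →* Matrix.unitaryGroup (Fin n) ℂ) (h : IrrM (toM π))
    (l : List (Fin d × Bool)) (hl : l ≠ []) (hred : IsRed l) (m : ℕ) (hm : l.length ≤ m) :
    ∑ S : Fin d → SL 2 p, ‖(toM π (ev S l)).trace‖ ≤
      (Fintype.card (Fin d → SL 2 p) : ℝ) * (2 * ((2 * d) ^ 2 + m) + Real.sqrt (2 * p)) := by
  classical
  have hp : 2 ≤ p := (Fact.out : p.Prime).two_le
  have hn : (n : ℝ) ≤ 2 * p := by
    have := irr_dim_le h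
    exact_mod_cast (by omega : n ≤ 2 * p)
  set K := Fintype.card (Fin d → SL 2 p)
  set N := (Finset.univ.filter fun S : Fin d → SL 2 p => IsSc (ev S l)).card with hN
  have hc : (N : ℝ) * p ≤ ((2 * d) ^ 2 + l.length) * K := by exact_mod_cast sc_count l hl hred
  have hm' : (l.length : ℝ) ≤ m := by exact_mod_cast hm
  calc _ ≤ ∑ S : Fin d → SL 2 p, ((if IsSc (ev S l) then (n : ℝ) else 0) + Real.sqrt (2 * p)) := by
        refine Finset.sum_le_sum fun S _ => ?_
        split_ifs with hS
        · have := toM_trace_le π (ev S l)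
          have := Real.sqrt_nonneg (2 * p)
          linarith
        · rw [zero_add]
          exact Real.le_sqrt_of_sq_le (char_bound h (toM_star π) _ hS)
    _ = N * n + K * Real.sqrt (2 * p) := by
        rw [Finset.sum_add_distrib, ← Finset.sum_filter, Finset.sum_const, Finset.sum_const,
          nsmul_eq_mul, nsmul_eq_mul, Finset.card_univ]
    _ ≤ N * (2 * p) + K * Real.sqrt (2 * p) := by gcongr
    _ = 2 * (N * p) + K * Real.sqrt (2 * p) := by ring
    _ ≤ 2 * (((2 * d) ^ 2 + m) * K) + K * Real.sqrt (2 * p) := by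
        have : ((2 * d : ℝ) ^ 2 + l.length) * K ≤ ((2 * d) ^ 2 + m) * K := by gcongr
        linarith
    _ = _ := by ring

/-- contribution of nontrivial words -/
noncomputable def nontrivSum (π : SL 2 p →* Matrix.unitaryGroup (Fin n) ℂ) (m : ℕ)
    (S : Fin d → SL 2 p) : ℂ :=
  ∑ w ∈ Finset.univ.filter fun w : Fin m → Fin d × Bool => red (List.ofFn w) ≠ [],
    (toM π (ev S (List.ofFn w))).trace

lemma trace_pow_le (hd : 1 ≤ d) (π : SL 2 p →* Matrix.unitaryGroup (Fin n) ℂ) (m : ℕ)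
    (S : Fin d → SL 2 p) (q : ℝ) (hq : 0 < q) (hq2 : q ^ 2 = 2 * d - 1) :
    ‖(Amat π S ^ m).trace‖ ≤ n * (2 * q) ^ m + ‖nontrivSum π m S‖ := by
  rw [amat_eq, pow_expand, Matrix.trace_sum,
    ← Finset.sum_filter_add_sum_filter_not Finset.univ
      (fun w : Fin m → Fin d × Bool => red (List.ofFn w) = [])]
  refine (norm_add_le _ _).trans ?_
  refine add_le_add ?_ le_rfl
  refine (norm_sum_le _ _).trans ?_
  refine (Finset.sum_le_sum (g := fun _ => (n : ℝ)) fun w _ => toM_trace_le π _).trans ?_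
  rw [Finset.sum_const, nsmul_eq_mul, mul_comm]
  gcongr
  exact trivial_count hd q hq hq2 m

lemma nontriv_avg (π : SL 2 p →* Matrix.unitaryGroup (Fin n) ℂ) (h : IrrM (toM π)) (m : ℕ) :
    ∑ S : Fin d → SL 2 p, ‖nontrivSum π m S‖ ≤
      (2 * d) ^ m * ((Fintype.card (Fin d → SL 2 p) : ℝ) *
        (2 * ((2 * d) ^ 2 + m) + Real.sqrt (2 * p))) := by
  set B := (Fintype.card (Fin d → SL 2 p) : ℝ) *
        (2 * ((2 * d) ^ 2 + m) + Real.sqrt (2 * p)) with hB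
  have hB0 : 0 ≤ B := by positivity
  calc _ ≤ ∑ S : Fin d → SL 2 p,
        ∑ w ∈ Finset.univ.filter fun w : Fin m → Fin d × Bool => red (List.ofFn w) ≠ [],
          ‖(toM π (ev S (List.ofFn w))).trace‖ := Finset.sum_le_sum fun S _ => norm_sum_le _ _
    _ = ∑ w ∈ Finset.univ.filter fun w : Fin m → Fin d × Bool => red (List.ofFn w) ≠ [],
          ∑ S : Fin d → SL 2 p, ‖(toM π (ev S (List.ofFn w))).trace‖ := Finset.sum_comm
    _ ≤ ∑ w ∈ Finset.univ.filter fun w : Fin m → Fin d × Bool => red (List.ofFn w) ≠ [], B := by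
        refine Finset.sum_le_sum fun w hw => ?_
        have := word_avg (d := d) π h (red (List.ofFn w)) (Finset.mem_filter.1 hw).2 (isRed_red _) m
          ((length_red _).trans (by simp))
        simpa only [ev_red] using this
    _ ≤ (2 * d) ^ m * B := by
        rw [Finset.sum_const, nsmul_eq_mul]
        gcongr
        have : (Finset.univ.filter fun w : Fin m → Fin d × Bool => red (List.ofFn w) ≠ []).card
            ≤ (2 * d) ^ m := by
          refine (Finset.card_le_univ _).trans (le_of_eq ?_)
          simp [mul_comm]
        exact_mod_cast this

/-- numerical facts -/
lemma numerics (hd : 2 ≤ d) (p : ℕ) (hp : 2 ≤ p) :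
    ∃ k : ℕ, ((2 * d : ℝ) ^ (2 * k)) ≤ Real.sqrt p ∧ Real.sqrt p ≤ (2 * d : ℝ) ^ (2 * k + 2) ∧
      (p : ℝ) ^ (1 / 4 : ℝ) ≤ (2 * d) ^ (k + 1) ∧ ((2 * k : ℕ) : ℝ) ≤ Real.sqrt p := by
  set b := (2 * d) ^ 4 with hb
  have hb1 : 1 < b := Nat.one_lt_pow (by norm_num) (by omega)
  have h1 : (b ^ Nat.log b p : ℕ) ≤ p := Nat.pow_log_le_self b (by omega)
  have h2 : p < b ^ (Nat.log b p + 1) := Nat.lt_pow_succ_log_self hb1 p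
  set k := Nat.log b p
  have h1' : ((2 * d : ℝ) ^ 4) ^ k ≤ p := by rw [hb] at h1; exact_mod_cast h1
  have h2' : (p : ℝ) ≤ ((2 * d : ℝ) ^ 4) ^ (k + 1) := by rw [hb] at h2; exact_mod_cast h2.le
  have hA : (2 * d : ℝ) ^ (2 * k) ≤ Real.sqrt p := by
    apply Real.le_sqrt_of_sq_le
    refine le_trans (le_of_eq ?_) h1'
    rw [← pow_mul, ← pow_mul]; congr 1; ring
  refine ⟨k, hA, ?_, ?_, ?_⟩
  · rw [Real.sqrt_le_left (by positivity)]
    refine h2'.trans (le_of_eq ?_)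
    rw [← pow_mul, ← pow_mul]; congr 1; ring
  · have : ((2 * d : ℝ) ^ (k + 1)) = (((2 * d : ℝ) ^ 4) ^ (k + 1)) ^ (1 / 4 : ℝ) := by
      rw [← pow_mul, mul_comm 4, pow_mul, ← Real.rpow_natCast _ 4, ← Real.rpow_mul (by positivity)]
      norm_num
    rw [this]
    apply Real.rpow_le_rpow (by positivity) h2' (by norm_num)
  · refine le_trans ?_ hA
    have : 2 * k ≤ (2 * d) ^ (2 * k) := (Nat.lt_pow_self (by omega)).le
    exact_mod_cast this

end Final

/-- Fix d ≥ 2, α > 1, ε > 0. There exist C, c > 0 such that for every prime p and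
every nontrivial irreducible unitary representation π of SL₂(ℤ/pℤ), with probability at least
1 − c·p^{−1/4} over a uniform S ∈ SL₂(ℤ/pℤ)^d, the number of eigenvalues λ of A_{π,S} with
|λ| > α·2√(2d−1) is at most C·p^{1 − (log_{2d}(α) − ε)/2}. -/
theorem stmt1 (d : ℕ) (hd : 2 ≤ d) (α : ℝ) (hα : 1 < α) (ε : ℝ) (hε : 0 < ε) :
    ∃ C c : ℝ, 0 < C ∧ 0 < c ∧
      ∀ (p : ℕ), p.Prime →
        ∀ (n : ℕ) (π : SL 2 p →* Matrix.unitaryGroup (Fin n) ℂ),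
          IsIrreducibleRep π → (∃ g, π g ≠ 1) →
          (1 - c * (p : ℝ) ^ (-(1/4 : ℝ))) ≤
            (Nat.card {S : Fin d → SL 2 p //
                (excCount (Amat π S) (α * (2 * Real.sqrt (2 * d - 1))) : ℝ) ≤
                  C * (p : ℝ) ^ (1 - (Real.logb (2 * d) α - ε) / 2)} : ℝ) /
              (Nat.card (Fin d → SL 2 p) : ℝ) := by
  classical
  have hd2 : (2 : ℝ) ≤ d := by exact_mod_cast hd
  refine ⟨3 * α ^ 2, (2 * (2 * d) ^ 2 + 4) * (2 * d), by positivity, by positivity, ?_⟩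
  intro p hp n π hirr _
  have : Fact p.Prime := ⟨hp⟩
  have hirr' : IrrM (toM π) := hirr
  have hp2 : 2 ≤ p := hp.two_le
  have hpR : (2 : ℝ) ≤ p := by exact_mod_cast hp2
  have hpos : (0 : ℝ) < p := by linarith
  obtain ⟨k, n1, n2, n3, n4⟩ := numerics hd p hp2
  set q := Real.sqrt (2 * d - 1) with hq
  have hq2 : q ^ 2 = 2 * d - 1 := Real.sq_sqrt (by linarith)
  have hq0 : 0 < q := Real.sqrt_pos.2 (by linarith)
  set m := 2 * k with hm
  set K := Fintype.card (Fin d → SL 2 p) with hK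
  have hK0 : (0 : ℝ) < K := by exact_mod_cast (Fintype.card_pos : 0 < K)
  set r := Real.sqrt p with hr
  have hr2 : r * r = p := Real.mul_self_sqrt hpos.le
  have hr1 : 1 ≤ r := by rw [hr, Real.one_le_sqrt]; linarith
  have hn : (n : ℝ) ≤ 2 * p := by
    have := irr_dim_le hirr'
    exact_mod_cast (by omega : n ≤ 2 * p)
  have hβ : 0 < (2 * q) ^ m := by positivity
  set L := Real.logb (2 * d) α with hL
  have hL0 : 0 ≤ L := Real.logb_nonneg (by linarith) hα.le
  -- deterministic bound on the good event
  have hgood : ∀ S : Fin d → SL 2 p, ‖nontrivSum π m S‖ ≤ p * (2 * q) ^ m →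
      (excCount (Amat π S) (α * (2 * q)) : ℝ) ≤ 3 * α ^ 2 * (p : ℝ) ^ (1 - (L - ε) / 2) := by
    intro S hS
    have e1 := exc_bound (amat_herm π S) (α * (2 * q)) (by positivity) k
    have e2 := trace_pow_le (by omega) π m S q hq0 hq2
    set N : ℝ := (excCount (Amat π S) (α * (2 * q)) : ℝ)
    have e3 : N * α ^ m * (2 * q) ^ m ≤ 3 * p * (2 * q) ^ m := by
      calc N * α ^ m * (2 * q) ^ m = N * (α * (2 * q)) ^ m := by rw [mul_pow]; ring
        _ ≤ _ := e1.trans e2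
        _ ≤ 2 * p * (2 * q) ^ m + p * (2 * q) ^ m := by gcongr
        _ = _ := by ring
    have e4 : N * α ^ m ≤ 3 * p := le_of_mul_le_mul_right e3 hβ
    have e5 : (p : ℝ) ^ (L / 2) ≤ α ^ (m + 2) := by
      have a1 : α = (2 * d : ℝ) ^ L := (Real.rpow_logb (by linarith) (by linarith) (by linarith)).symm
      have a2 : α ^ (m + 2) = ((2 * d : ℝ) ^ (m + 2)) ^ L := by
        conv_lhs => rw [a1]
        rw [← Real.rpow_natCast, ← Real.rpow_natCast, ← Real.rpow_mul (by positivity),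
          ← Real.rpow_mul (by positivity), mul_comm L]
      have a3 : (p : ℝ) ^ (L / 2) = r ^ L := by
        rw [hr, Real.sqrt_eq_rpow, ← Real.rpow_mul hpos.le]; congr 1; ring
      rw [a2, a3]
      exact Real.rpow_le_rpow (by positivity) n2 hL0
    have e6 : (p : ℝ) = (p : ℝ) ^ (L / 2) * (p : ℝ) ^ (1 - L / 2) := by
      rw [← Real.rpow_add hpos]; simp
    have hαm : 0 < α ^ m := by positivity
    have e7 : N * α ^ m ≤ (3 * α ^ 2 * (p : ℝ) ^ (1 - L / 2)) * α ^ m := by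
      calc N * α ^ m ≤ 3 * p := e4
        _ = 3 * ((p : ℝ) ^ (L / 2) * (p : ℝ) ^ (1 - L / 2)) := by rw [← e6]
        _ ≤ 3 * (α ^ (m + 2) * (p : ℝ) ^ (1 - L / 2)) := by gcongr
        _ = _ := by ring
    have e8 := le_of_mul_le_mul_right e7 hαm
    refine e8.trans ?_
    gcongr
    · linarith
    · linarith
  -- Markov
  set bad := Finset.univ.filter fun S : Fin d → SL 2 p => ¬ ‖nontrivSum π m S‖ ≤ p * (2 * q) ^ m
    with hbad
  have hmark : (bad.card : ℝ) * (p * (2 * q) ^ m) ≤ p * (K * (2 * (2 * d) ^ 2 + 4)) := by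
    calc (bad.card : ℝ) * (p * (2 * q) ^ m) = ∑ S ∈ bad, (p * (2 * q) ^ m : ℝ) := by
          rw [Finset.sum_const, nsmul_eq_mul]
      _ ≤ ∑ S ∈ bad, ‖nontrivSum π m S‖ := by
          refine Finset.sum_le_sum fun S hS => ?_
          exact (not_le.1 (Finset.mem_filter.1 hS).2).le
      _ ≤ ∑ S : Fin d → SL 2 p, ‖nontrivSum π m S‖ :=
          Finset.sum_le_sum_of_subset_of_nonneg (Finset.subset_univ _) fun _ _ _ => norm_nonneg _
      _ ≤ (2 * d) ^ m * (K * (2 * ((2 * d) ^ 2 + m) + Real.sqrt (2 * p))) := nontriv_avg π hirr' m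
      _ ≤ r * (K * ((2 * (2 * d) ^ 2 + 4) * r)) := by
          gcongr
          have s1 : Real.sqrt (2 * p) ≤ 2 * r := by
            rw [Real.sqrt_le_left (by positivity)]
            nlinarith
          have s2 : (2 * (2 * d : ℝ) ^ 2) * 1 ≤ (2 * (2 * d : ℝ) ^ 2) * r := by gcongr
          nlinarith
      _ = _ := by rw [← hr2]; ring
  have hbad2 : (bad.card : ℝ) ≤ (2 * (2 * d) ^ 2 + 4) * (2 * d) * (p : ℝ) ^ (-(1/4 : ℝ)) * K := by
    have f1 : (bad.card : ℝ) * (2 * q) ^ m ≤ K * (2 * (2 * d) ^ 2 + 4) := by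
      apply le_of_mul_le_mul_left _ hpos
      linarith
    have f2 : (2 * d : ℝ) ^ k ≤ (2 * q) ^ m := by
      rw [hm, pow_mul]
      gcongr
      rw [mul_pow, hq2]; linarith
    have f3 : (p : ℝ) ^ (1 / 4 : ℝ) ≤ (2 * q) ^ m * (2 * d) := by
      refine n3.trans ?_
      rw [pow_succ]
      gcongr
    have hp4 : (0 : ℝ) < (p : ℝ) ^ (1 / 4 : ℝ) := by positivity
    rw [Real.rpow_neg hpos.le]
    rw [mul_assoc, mul_comm _ (K : ℝ), ← mul_assoc, ← div_eq_mul_inv, le_div_iff₀ hp4]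
    calc (bad.card : ℝ) * (p : ℝ) ^ (1 / 4 : ℝ) ≤ bad.card * ((2 * q) ^ m * (2 * d)) := by gcongr
      _ = (bad.card * (2 * q) ^ m) * (2 * d) := by ring
      _ ≤ (K * (2 * (2 * d) ^ 2 + 4)) * (2 * d) := by gcongr
      _ = _ := by ring
  rw [Nat.card_eq_fintype_card, Nat.card_eq_fintype_card, ← hK, le_div_iff₀ hK0,
    Fintype.card_subtype]
  have hcard : K ≤ bad.card + (Finset.univ.filter fun S : Fin d → SL 2 p =>
      (excCount (Amat π S) (α * (2 * q)) : ℝ) ≤ 3 * α ^ 2 * (p : ℝ) ^ (1 - (L - ε) / 2)).card := by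
    rw [hK, ← Finset.card_univ]
    refine le_trans (Finset.card_le_card ?_) (Finset.card_union_le _ _)
    intro S _
    rw [Finset.mem_union, hbad, Finset.mem_filter, Finset.mem_filter]
    by_cases hS : ‖nontrivSum π m S‖ ≤ p * (2 * q) ^ m
    · exact Or.inr ⟨Finset.mem_univ _, hgood S hS⟩
    · exact Or.inl ⟨Finset.mem_univ _, hS⟩
  have hcard' : (K : ℝ) ≤ bad.card + ((Finset.univ.filter fun S : Fin d → SL 2 p =>
      (excCount (Amat π S) (α * (2 * q)) : ℝ) ≤ 3 * α ^ 2 * (p : ℝ) ^ (1 - (L - ε) / 2)).card : ℝ) := by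
    exact_mod_cast hcard
  linarith
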